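/- For each admissible pair (p,t), the subgroup of GL(3,ℂ) generated by {R₁, R₃·J, J⁻¹·R₁·R₂, J·R₁·R₃} has finite index in Γ̃(p,t). -/

import Mathlib

/-!
Write `a = R₁` and `j = J`. Then `R₂ = j a j⁻¹` and `R₃ = j⁻¹ a j`, and three relations hold: `a ^ p = 1`, `j ^ 3 = 1`, and the braid relation `R₁ R₂ R₁ = R₂ R₁ R₂`. In terms of `a` and `j`,
the hybrid subgroup `K` contains `a`, `R₃ J = j⁻¹ a j⁻¹` and `J R₁ R₃ = j a j⁻¹ a j`.

Adding the relation `(a j⁻¹)² = 1` turns `⟨a, j⟩` into a quotient of the `(2, 3, p)` triangle group,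
which for `p = 3, 4, 5` is the rotation group of the tetrahedron, the octahedron or the icosahedron,
with `a` the rotation about a vertex and `j` the rotation about an adjacent face. The elements of `K`
listed above all fix that vertex, so one expects at most `4`, `6` or `12` cosets of `K`, one for each
vertex. The relations suffice to prove this: `exists_finite_invariant_three`,
`exists_finite_invariant_four` and `exists_finite_invariant_five` show that the orbit of the trivial
coset under `a` and `j` closes up after that many points. Hence the orbit of the trivial coset under
`⟨a, j⟩` is finite, and `K`, its stabilizer, has finite index (`finiteIndex_of_relations`).
-/

noncomputable section

open Matrix

/-- η = exp(iπ/p) -/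
def eta (p : ℕ) : ℂ := Complex.exp (Real.pi * Complex.I / p)
/-- η̄ = exp(−iπ/p) -/
def etab (p : ℕ) : ℂ := Complex.exp (-(Real.pi * Complex.I / p))
/-- φ = exp(iπt/3) -/
def phi (t : ℝ) : ℂ := Complex.exp (Real.pi * Complex.I * t / 3)
/-- φ̄ = exp(−iπt/3) -/
def phib (t : ℝ) : ℂ := Complex.exp (-(Real.pi * Complex.I * t / 3))
/-- α = 1/(2 sin(π/p)) -/
def alpha (p : ℕ) : ℂ := 1 / (2 * Real.sin (Real.pi / p))

def R1 (p : ℕ) (t : ℝ) : Matrix (Fin 3) (Fin 3) ℂ :=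
  !![eta p ^ 2, -Complex.I * eta p * phib t, -Complex.I * eta p * phi t;
     0, 1, 0;
     0, 0, 1]

def R2 (p : ℕ) (t : ℝ) : Matrix (Fin 3) (Fin 3) ℂ :=
  !![1, 0, 0;
     -Complex.I * eta p * phi t, eta p ^ 2, -Complex.I * eta p * phib t;
     0, 0, 1]

def R3 (p : ℕ) (t : ℝ) : Matrix (Fin 3) (Fin 3) ℂ :=
  !![1, 0, 0;
     0, 1, 0;
     -Complex.I * eta p * phib t, -Complex.I * eta p * phi t, eta p ^ 2]

def Jmat : Matrix (Fin 3) (Fin 3) ℂ :=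
  !![0, 0, 1;
     1, 0, 0;
     0, 1, 0]

def Hmat (p : ℕ) (t : ℝ) : Matrix (Fin 3) (Fin 3) ℂ :=
  !![1, -alpha p * phi t, -alpha p * phib t;
     -alpha p * phib t, 1, -alpha p * phi t;
     -alpha p * phi t, -alpha p * phib t, 1]

/-- The Hermitian form ⟨x,y⟩ = xᵀ·H·ȳ. -/
def form (p : ℕ) (t : ℝ) (x y : Fin 3 → ℂ) : ℂ :=
  dotProduct x ((Hmat p t).mulVec (fun i => starRingEnd ℂ (y i)))

/-- The admissible pairs `(p,t)`: the values for which Mostow's group Γ(p,t) is discrete. -/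
def admissible (p : ℕ) (t : ℝ) : Prop :=
  (p = 3 ∧ (t = 0 ∨ t = 1/30 ∨ t = 1/18 ∨ t = 1/12 ∨ t = 5/42 ∨ t = 1/6 ∨ t = 7/30 ∨ t = 1/3)) ∨
  (p = 4 ∧ (t = 0 ∨ t = 1/12 ∨ t = 3/20 ∨ t = 1/4 ∨ t = 5/12)) ∨
  (p = 5 ∧ (t = 1/10 ∨ t = 1/5 ∨ t = 11/30 ∨ t = 7/10))

open scoped Pointwise

/-! ### Vertex orbits of the tetrahedron, octahedron and icosahedron

Throughout this part `a` and `k` are two maps on a set `X`, to be thought of as the actions of `R₁` and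
`J⁻¹`, so that `k ∘ k` is the action of `J`; the point `o` stands for the trivial coset. -/

/-- The tetrahedron: the vertices are `o`, `k o`, `a (k o)`, `a (a (k o))`. -/
lemma exists_finite_invariant_three {X : Type*} (a k : X → X) (o : X)
    (ha : ∀ x, a (a (a x)) = x) (hk : ∀ x, k (k (k x)) = x)
    (h0 : a o = o) (h1 : k (a (k o)) = o) (h2 : k (k (a (k (a (k (k o)))))) = o) :
    ∃ F : Set X, F.Finite ∧ o ∈ F ∧ (∀ x ∈ F, a x ∈ F) ∧ ∀ x ∈ F, k x ∈ F := by
  obtain ⟨p0, e0⟩ : ∃ y, k o = y := ⟨_, rfl⟩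
  obtain ⟨p1, e1⟩ : ∃ y, a p0 = y := ⟨_, rfl⟩
  obtain ⟨p2, e2⟩ : ∃ y, a p1 = y := ⟨_, rfl⟩
  have c2 : a p2 = p0 := by grind
  have k1 : k p1 = o := by grind
  have k0 : k p0 = p1 := by grind
  have k2 : k p2 = p2 := by grind
  refine ⟨{o, p0, p1, p2}, by simp, by simp, ?_, ?_⟩ <;>
    simp [h0, e0, e1, e2, c2, k0, k1, k2]

/-- The octahedron: the vertices are `o`, the four points `a ^ i (k o)` around it, and the opposite
vertex `u = k (a ^ 3 (k o))`. The braid relation at `k o` shows that `a` fixes `u`. -/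
lemma exists_finite_invariant_four {X : Type*} (a k : X → X) (o : X)
    (ha : ∀ x, a (a (a (a x))) = x) (hk : ∀ x, k (k (k x)) = x)
    (hb : ∀ x, a (k (k (a (k (a x))))) = k (k (a (k (a (k (k (a (k x)))))))))
    (h0 : a o = o) (h1 : k (a (k o)) = o) (h2 : k (k (a (k (a (k (k o)))))) = o) :
    ∃ F : Set X, F.Finite ∧ o ∈ F ∧ (∀ x ∈ F, a x ∈ F) ∧ ∀ x ∈ F, k x ∈ F := by
  obtain ⟨p0, e0⟩ : ∃ y, k o = y := ⟨_, rfl⟩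
  obtain ⟨p1, e1⟩ : ∃ y, a p0 = y := ⟨_, rfl⟩
  obtain ⟨p2, e2⟩ : ∃ y, a p1 = y := ⟨_, rfl⟩
  obtain ⟨p3, e3⟩ : ∃ y, a p2 = y := ⟨_, rfl⟩
  have c3 : a p3 = p0 := by grind
  have k1 : k p1 = o := by grind
  have k0 : k p0 = p1 := by grind
  have k2 : k p2 = p3 := by grind
  obtain ⟨u, f3⟩ : ∃ y, k p3 = y := ⟨_, rfl⟩
  have ku : k u = p2 := by grind
  have au : a u = u := by
    have h := hb p0
    simp only [e0, e1, e2, k0, k1, h0, k2, f3] at h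
    grind
  refine ⟨{o, p0, p1, p2, p3, u}, by simp, by simp, ?_, ?_⟩ <;>
    simp [h0, e0, e1, e2, e3, c3, k0, k1, k2, f3, ku, au]

/-- The icosahedron: the vertices are `o`, the five points `p i = a ^ i (k o)` around it, the five
points `q i = a ^ i (k (p 4))` around the opposite vertex, and the opposite vertex `z = k (q 3)`. The
faces not touching `o` are found by applying the braid relation at `p 0`, `p 2`, `q 0` and `q 2`. -/
lemma exists_finite_invariant_five {X : Type*} (a k : X → X) (o : X)
    (ha : ∀ x, a (a (a (a (a x)))) = x) (hk : ∀ x, k (k (k x)) = x)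
    (hb : ∀ x, a (k (k (a (k (a x))))) = k (k (a (k (a (k (k (a (k x)))))))))
    (h0 : a o = o) (h1 : k (a (k o)) = o) (h2 : k (k (a (k (a (k (k o)))))) = o) :
    ∃ F : Set X, F.Finite ∧ o ∈ F ∧ (∀ x ∈ F, a x ∈ F) ∧ ∀ x ∈ F, k x ∈ F := by
  obtain ⟨p0, e0⟩ : ∃ y, k o = y := ⟨_, rfl⟩
  obtain ⟨p1, e1⟩ : ∃ y, a p0 = y := ⟨_, rfl⟩
  obtain ⟨p2, e2⟩ : ∃ y, a p1 = y := ⟨_, rfl⟩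
  obtain ⟨p3, e3⟩ : ∃ y, a p2 = y := ⟨_, rfl⟩
  obtain ⟨p4, e4⟩ : ∃ y, a p3 = y := ⟨_, rfl⟩
  have c4 : a p4 = p0 := by grind
  have k1 : k p1 = o := by grind
  have k0 : k p0 = p1 := by grind
  have k2 : k p2 = p4 := by grind
  obtain ⟨q0, f4⟩ : ∃ y, k p4 = y := ⟨_, rfl⟩
  have l0 : k q0 = p2 := by grind
  obtain ⟨q1, g1⟩ : ∃ y, a q0 = y := ⟨_, rfl⟩
  obtain ⟨q2, g2⟩ : ∃ y, a q1 = y := ⟨_, rfl⟩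
  obtain ⟨q3, g3⟩ : ∃ y, a q2 = y := ⟨_, rfl⟩
  obtain ⟨q4, g4⟩ : ∃ y, a q3 = y := ⟨_, rfl⟩
  have d4 : a q4 = q0 := by grind
  have l1 : k q1 = p3 := by
    have h := hb p0
    simp only [e0, e1, e2, k0, k1, h0, k2, f4, g1] at h
    grind
  have k3 : k p3 = q4 := by
    have h := hb p2
    simp only [e0, e1, e3, c4, k0, k1, h0, k2] at h
    grind
  have l4 : k q4 = q1 := by grind
  have l2 : k q2 = q3 := by
    have h := hb q0
    simp only [e3, e4, k3, f4, g1, g2, l0, l1, l4] at h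
    grind
  obtain ⟨z, l3⟩ : ∃ y, k q3 = y := ⟨_, rfl⟩
  have kz : k z = q2 := by grind
  have az : a z = z := by
    have h := hb q2
    simp only [e4, k3, f4, g1, g3, g4, l1, l4, l2, l3] at h
    grind
  refine ⟨{o, p0, p1, p2, p3, p4, q0, q1, q2, q3, q4, z}, by simp, by simp, ?_, ?_⟩ <;>
    simp [h0, e0, e1, e2, e3, e4, c4, k0, k1, k2, k3, f4, g1, g2, g3, g4, d4, l0, l1, l2, l3, l4,
      kz, az]

/-! ### Finite index from the relations -/

/-- A subgroup `K` has finite index in `⟨a, j⟩` as soon as a finite set of cosets of `K`, containing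
the trivial one, is stable under `a` and `j⁻¹`. -/
lemma finiteIndex_of_invariant {G : Type*} [Group G] (a j : G) (K : Subgroup G)
    (h : ∃ F : Set (G ⧸ K), F.Finite ∧ ((1 : G) : G ⧸ K) ∈ F ∧ (∀ x ∈ F, a • x ∈ F) ∧
      ∀ x ∈ F, j⁻¹ • x ∈ F) :
    (K.subgroupOf (Subgroup.closure {a, j})).FiniteIndex := by
  obtain ⟨F, hF, ho, ha, hk⟩ := h
  set Γ := Subgroup.closure {a, j}
  -- On finite sets, `g • F ⊆ F` already implies `g • F = F`.
  have hstab : Γ ≤ MulAction.stabilizer G F := by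
    refine (Subgroup.closure_le _).2 ?_
    rintro g (rfl | rfl)
    · exact (MulAction.mem_stabilizer_set_iff_smul_set_subset hF).2
        (Set.smul_set_subset_iff.2 fun x hx => ha x hx)
    · refine (inv_mem_iff (H := MulAction.stabilizer G F)).1 ?_
      exact (MulAction.mem_stabilizer_set_iff_smul_set_subset hF).2
        (Set.smul_set_subset_iff.2 fun x hx => hk x hx)
  have hS : K.subgroupOf Γ = MulAction.stabilizer Γ ((1 : G) : G ⧸ K) := by
    ext g
    rw [Subgroup.mem_subgroupOf, MulAction.mem_stabilizer_iff]
    change _ ↔ (g : G) • ((1 : G) : G ⧸ K) = _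
    rw [MulAction.Quotient.smul_coe, eq_comm, QuotientGroup.eq]
    simp
  have horb : MulAction.orbit Γ ((1 : G) : G ⧸ K) ⊆ F := by
    rintro _ ⟨g, rfl⟩
    have hg : (g : G) • F = F := hstab g.2
    exact hg ▸ Set.smul_mem_smul_set ho
  refine ⟨?_⟩
  rw [hS, MulAction.index_stabilizer]
  exact (Set.ncard_pos (hF.subset horb)).2 (MulAction.nonempty_orbit _) |>.ne'

lemma finiteIndex_of_relations {G : Type*} [Group G] (p : ℕ) (hp : p = 3 ∨ p = 4 ∨ p = 5)
    (a j : G) (K : Subgroup G) (ha : a ^ p = 1) (hj : j ^ 3 = 1)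
    (hb : a * (j * a * j⁻¹) * a = (j * a * j⁻¹) * a * (j * a * j⁻¹))
    (h0 : a ∈ K) (h1 : j⁻¹ * a * j⁻¹ ∈ K) (h2 : j * a * j⁻¹ * a * j ∈ K) :
    (K.subgroupOf (Subgroup.closure {a, j})).FiniteIndex := by
  have hjj : j = j⁻¹ * j⁻¹ := by
    rw [← _root_.mul_inv_rev, eq_inv_iff_mul_eq_one, ← hj, pow_three]
  have hfix : ∀ g ∈ K, g • ((1 : G) : G ⧸ K) = ((1 : G) : G ⧸ K) := fun g hg => by
    rw [MulAction.Quotient.smul_coe, eq_comm, QuotientGroup.eq]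
    simpa using hg
  have hsj : ∀ x : G ⧸ K, j • x = j⁻¹ • j⁻¹ • x := fun x => by
    rw [smul_smul, ← hjj]
  have hk : ∀ x : G ⧸ K, j⁻¹ • j⁻¹ • j⁻¹ • x = x := fun x => by
    rw [← hsj, smul_inv_smul]
  have hb' : ∀ x : G ⧸ K, a • j⁻¹ • j⁻¹ • a • j⁻¹ • a • x =
      j⁻¹ • j⁻¹ • a • j⁻¹ • a • j⁻¹ • j⁻¹ • a • j⁻¹ • x := fun x => by
    simpa only [mul_smul, hsj] using congrArg (· • x) hb
  have h0' := hfix _ h0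
  have h1' := hfix _ h1
  have h2' := hfix _ h2
  simp only [mul_smul, hsj] at h1' h2'
  refine finiteIndex_of_invariant a j K ?_
  have hpow : ∀ x : G ⧸ K, a ^ p • x = x := fun x => by rw [ha, one_smul]
  rcases hp with rfl | rfl | rfl <;> simp only [pow_succ, pow_zero, one_mul, mul_smul] at hpow
  · exact exists_finite_invariant_three (a • ·) (j⁻¹ • ·) _ hpow hk h0' h1' h2'
  · exact exists_finite_invariant_four (a • ·) (j⁻¹ • ·) _ hpow hk hb' h0' h1' h2'
  · exact exists_finite_invariant_five (a • ·) (j⁻¹ • ·) _ hpow hk hb' h0' h1' h2'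

/-! ### The relations for Mostow's matrices -/

lemma phi_mul_phib (t : ℝ) : phi t * phib t = 1 := by
  rw [phi, phib, ← Complex.exp_add, add_neg_cancel, Complex.exp_zero]

lemma reflection_pow (q u v : ℂ) (n : ℕ) :
    (!![q, u, v; 0, 1, 0; 0, 0, 1] : Matrix (Fin 3) (Fin 3) ℂ) ^ n =
      !![q ^ n, (∑ i ∈ Finset.range n, q ^ i) * u, (∑ i ∈ Finset.range n, q ^ i) * v;
        0, 1, 0; 0, 0, 1] := by
  induction n with
  | zero => ext i j; fin_cases i <;> fin_cases j <;> simp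
  | succ n ih =>
    rw [pow_succ', ih, Finset.sum_range_succ', pow_succ']
    simp only [pow_succ', ← Finset.mul_sum, pow_zero]
    ext i j
    fin_cases i <;> fin_cases j <;> simp [Matrix.mul_apply, Fin.sum_univ_three] <;> ring

/-- `R₁` is a complex reflection whose nontrivial eigenvalue `η²` is a primitive `p`-th root of `1`. -/
lemma R1_pow (p : ℕ) (t : ℝ) (hp : 1 < p) : R1 p t ^ p = 1 := by
  have hq : IsPrimitiveRoot (eta p ^ 2) p := by
    have h := Complex.isPrimitiveRoot_exp p (by omega)
    convert h using 1
    rw [eta, ← Complex.exp_nat_mul]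
    congr 1
    push_cast
    ring
  rw [R1, reflection_pow, hq.pow_eq_one, hq.geom_sum_eq_zero hp]
  ext i j
  fin_cases i <;> fin_cases j <;> simp

lemma Jmat_pow : Jmat ^ 3 = 1 := by
  ext i j
  fin_cases i <;> fin_cases j <;> simp [Jmat, pow_succ, Matrix.mul_apply, Fin.sum_univ_three]

lemma R2_mul_Jmat (p : ℕ) (t : ℝ) : R2 p t * Jmat = Jmat * R1 p t := by
  ext i j
  fin_cases i <;> fin_cases j <;> simp [R1, R2, Jmat, Matrix.mul_apply, Fin.sum_univ_three]

lemma Jmat_mul_R3 (p : ℕ) (t : ℝ) : Jmat * R3 p t = R1 p t * Jmat := by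
  ext i j
  fin_cases i <;> fin_cases j <;> simp [R1, R3, Jmat, Matrix.mul_apply, Fin.sum_univ_three]

lemma braid_R1_R2 (p : ℕ) (t : ℝ) :
    R1 p t * R2 p t * R1 p t = R2 p t * R1 p t * R2 p t := by
  have h := phi_mul_phib t
  have hI := Complex.I_sq
  ext i j
  fin_cases i <;> fin_cases j <;> simp [R1, R2, Matrix.mul_apply, Fin.sum_univ_three] <;> grind

/-- For each admissible pair (p,t), the subgroup ⟨R₁, R₃·J, J⁻¹·R₁·R₂, J·R₁·R₃⟩ has
finite index in Γ̃(p,t) = ⟨R₁, J⟩. -/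
theorem hybrid_finite_index (p : ℕ) (t : ℝ) (hadm : admissible p t)
    (R1' R2' R3' J' : GL (Fin 3) ℂ)
    (hR1 : (R1' : Matrix (Fin 3) (Fin 3) ℂ) = R1 p t)
    (hR2 : (R2' : Matrix (Fin 3) (Fin 3) ℂ) = R2 p t)
    (hR3 : (R3' : Matrix (Fin 3) (Fin 3) ℂ) = R3 p t)
    (hJ : (J' : Matrix (Fin 3) (Fin 3) ℂ) = Jmat) :
    let Γ : Subgroup (GL (Fin 3) ℂ) := Subgroup.closure {R1', J'}
    let Hyb : Subgroup (GL (Fin 3) ℂ) :=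
      Subgroup.closure {R1', R3' * J', J'⁻¹ * R1' * R2', J' * R1' * R3'}
    Hyb ≤ Γ ∧ (Hyb.subgroupOf Γ).FiniteIndex := by
  have hp : p = 3 ∨ p = 4 ∨ p = 5 := by
    rcases hadm with h | h | h
    exacts [.inl h.1, .inr (.inl h.1), .inr (.inr h.1)]
  have ha : R1' ^ p = 1 := Units.ext <| by
    simpa [hR1] using R1_pow p t (by omega)
  have hj : J' ^ 3 = 1 := Units.ext <| by
    simpa [hJ] using Jmat_pow
  have e2 : R2' = J' * R1' * J'⁻¹ := eq_mul_inv_of_mul_eq <| Units.ext <| by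
    simpa [hR1, hR2, hJ] using R2_mul_Jmat p t
  have e3 : R3' = J'⁻¹ * R1' * J' := by
    rw [mul_assoc]
    refine eq_inv_mul_of_mul_eq <| Units.ext ?_
    simpa [hR1, hR3, hJ] using Jmat_mul_R3 p t
  have hb : R1' * R2' * R1' = R2' * R1' * R2' := Units.ext <| by
    simpa [hR1, hR2] using braid_R1_R2 p t
  have hjj : J' * J' = J'⁻¹ := by
    rw [eq_inv_iff_mul_eq_one, ← hj, pow_succ, pow_two]
  intro Γ Hyb
  constructor
  · have h1 : R1' ∈ Γ := Subgroup.subset_closure (by simp)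
    have h2 : J' ∈ Γ := Subgroup.subset_closure (by simp)
    have h3 : J'⁻¹ ∈ Γ := inv_mem h2
    refine (Subgroup.closure_le _).2 ?_
    rintro g (rfl | rfl | rfl | rfl)
    · exact h1
    · rw [e3]
      exact mul_mem (mul_mem (mul_mem h3 h1) h2) h2
    · rw [e2]
      exact mul_mem (mul_mem h3 h1) (mul_mem (mul_mem h2 h1) h3)
    · rw [e3]
      exact mul_mem (mul_mem h2 h1) (mul_mem (mul_mem h3 h1) h2)
  · refine finiteIndex_of_relations p hp R1' J' Hyb ha hj (e2 ▸ hb)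
      (Subgroup.subset_closure (by simp)) ?_ ?_
    · have h : R3' * J' ∈ Hyb := Subgroup.subset_closure (by simp)
      rwa [e3, mul_assoc, hjj] at h
    · have h : J' * R1' * R3' ∈ Hyb := Subgroup.subset_closure (by simp)
      rwa [e3, ← mul_assoc, ← mul_assoc] at h
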